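/- The set of pairs (i,j) with 1 ≤ i < j ≤ n such that blk(i) ≠ blk(j), v_i − v_j ≥ 1, and v^{(i,j)}_a ≠ v^{(i,j)}_b for all a < b with blk(a) = blk(b), consists of exactly one pair, namely (i,j) = (1,n); moreover v_1 − v_n = c. (This says that the set S°_μ of Proposition 4.2 equals {(c, β)}, β the highest root.) -/

import Mathlib

open Finset

noncomputable section

/-- Sum of the first `j` block sizes (blocks are 1-indexed); `blkSum c j` is also the largest
element `ς_j` of the `j`-th block `C_j`. -/
def blkSum (c : ℕ → ℕ) (j : ℕ) : ℕ := ∑ i ∈ Finset.Icc 1 j, c i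

/-- Block index of `a ∈ {1,…,n}`: the least `j` with `a ≤ c 1 + ⋯ + c j`. -/
def blk (c : ℕ → ℕ) (a : ℕ) : ℕ := sInf {j | a ≤ blkSum c j}

/-!
On each block `C_j` the function `v` decreases by steps of `1`, so its set of values there is the
interval `[m_j, m_j + c_j)` with `m_j = v_{ς_j}`. Solving the recursion for `b` gives `m_1 = 1` and
`m_j = max(c, c_j) - c_j` for `j ≥ 2`. If `v_i > v_j` with `i ∈ C_p` and `j ∈ C_r`, swapping the two
values keeps `v` injective on blocks exactly when `v_j` lies below the interval of `C_p` and `v_i`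
above that of `C_r`. All intervals lie in the nonnegative integers and reach at least `c - 1`, and
for `p ≥ 2` the interval of `C_p` either starts at `0` or stops at `c - 1`; hence `p = 1`, `v_i = c`
and `v_j = 0`, so the interval of `C_r` is `[0, c)`, that is `c_r = c` and `r = l`.
-/

section Regularity

variable {α β γ : Type*}

theorem injOn_prodMk_Icc_iff [LinearOrder α] {f : α → β} {v : α → γ} {m n : α} :
    Set.InjOn (fun a ↦ (f a, v a)) (Set.Icc m n) ↔
      ∀ a a', m ≤ a → a < a' → a' ≤ n → f a = f a' → v a ≠ v a' := by
  constructor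
  · intro h a a' hma haa' ha'n hf hv
    exact haa'.ne (h ⟨hma, haa'.le.trans ha'n⟩ ⟨hma.trans haa'.le, ha'n⟩ (Prod.ext hf hv))
  · intro h a ha a' ha' heq
    obtain ⟨hf, hv⟩ := Prod.mk.inj heq
    rcases lt_trichotomy a a' with hlt | rfl | hlt
    · exact absurd hv (h a a' ha.1 hlt ha'.2 hf)
    · rfl
    · exact absurd hv.symm (h a' a ha'.1 hlt ha.2 hf.symm)

theorem injOn_prodMk_swap_iff [DecidableEq α] {f : α → β} {v : α → γ} {s : Set α} {i j : α}
    (h : s.InjOn fun a ↦ (f a, v a)) (hi : i ∈ s) (hj : j ∈ s) (hf : f i ≠ f j) (hv : v i ≠ v j) :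
    (s.InjOn fun a ↦ (f a, v (Equiv.swap i j a))) ↔
      v j ∉ v '' (s ∩ f ⁻¹' {f i}) ∧ v i ∉ v '' (s ∩ f ⁻¹' {f j}) := by
  have hij : i ≠ j := fun e ↦ hf (congrArg f e)
  constructor
  · intro hswap
    constructor
    · rintro ⟨a, ⟨has, hfa⟩, hva⟩
      have hai : a ≠ i := by rintro rfl; exact hv hva
      have haj : a ≠ j := by rintro rfl; exact hf hfa.symm
      refine hai (hswap has hi (Prod.ext hfa ?_))
      simpa only [Equiv.swap_apply_of_ne_of_ne hai haj, Equiv.swap_apply_left] using hva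
    · rintro ⟨a, ⟨has, hfa⟩, hva⟩
      have hai : a ≠ i := by rintro rfl; exact hf hfa
      have haj : a ≠ j := by rintro rfl; exact hv hva.symm
      refine haj (hswap has hj (Prod.ext hfa ?_))
      simpa only [Equiv.swap_apply_of_ne_of_ne hai haj, Equiv.swap_apply_right] using hva
  · rintro ⟨hvj, hvi⟩ a ha a' ha' heq
    obtain ⟨hfa, hva⟩ := Prod.mk.inj heq
    have hvj' : ∀ x ∈ s, f x = f i → v x ≠ v j := fun x hx hfx hvx ↦ hvj ⟨x, ⟨hx, hfx⟩, hvx⟩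
    have hvi' : ∀ x ∈ s, f x = f j → v x ≠ v i := fun x hx hfx hvx ↦ hvi ⟨x, ⟨hx, hfx⟩, hvx⟩
    have hinj : v a = v a' → a = a' := fun e ↦ h ha ha' (Prod.ext hfa e)
    simp only [Equiv.swap_apply_def] at hva
    grind

end Regularity

section Blocks

variable {c : ℕ → ℕ} {l a a' j : ℕ}

theorem blkSum_zero (c : ℕ → ℕ) : blkSum c 0 = 0 := rfl

theorem blkSum_succ (c : ℕ → ℕ) (j : ℕ) : blkSum c (j + 1) = blkSum c j + c (j + 1) :=
  Finset.sum_Icc_succ_top (Nat.le_add_left 1 j) c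

theorem blkSum_mono (c : ℕ → ℕ) : Monotone (blkSum c) :=
  monotone_nat_of_le_succ fun j ↦ by rw [blkSum_succ]; exact Nat.le_add_right _ _

theorem le_blkSum (c : ℕ → ℕ) {j : ℕ} (hj : j ≠ 0) : c j ≤ blkSum c j :=
  Finset.single_le_sum (fun _ _ ↦ Nat.zero_le _)
    (Finset.mem_Icc.2 ⟨Nat.one_le_iff_ne_zero.2 hj, le_rfl⟩)

theorem blk_le_iff (ha : a ≤ blkSum c l) : blk c a ≤ j ↔ a ≤ blkSum c j :=
  ⟨fun h ↦ (Nat.sInf_mem (s := {k | a ≤ blkSum c k}) ⟨l, ha⟩).trans (blkSum_mono c h),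
    fun h ↦ Nat.sInf_le h⟩

theorem blk_mono (haa' : a ≤ a') (ha' : a' ≤ blkSum c l) : blk c a ≤ blk c a' :=
  (blk_le_iff (haa'.trans ha')).2 (haa'.trans ((blk_le_iff ha').1 le_rfl))

theorem blk_mem_Icc (ha : a ∈ Set.Icc 1 (blkSum c l)) : blk c a ∈ Set.Icc 1 l := by
  refine ⟨?_, (blk_le_iff ha.2).2 ha.2⟩
  by_contra! h
  have := (blk_le_iff ha.2).1 (Nat.lt_one_iff.1 h).le
  exact absurd (ha.1.trans this) (by simp [blkSum_zero])

theorem blk_eq_iff (hj : j ≠ 0) : blk c a = j ↔ a ≤ blkSum c j ∧ blkSum c j < a + c j := by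
  obtain ⟨k, rfl⟩ := Nat.exists_eq_add_one_of_ne_zero hj
  have hsum := blkSum_succ c k
  constructor
  · intro h
    have hmem : a ≤ blkSum c (k + 1) := by
      have hpos : 0 < sInf {i | a ≤ blkSum c i} := by rw [← blk, h]; exact k.succ_pos
      have hblk := Nat.sInf_mem (Nat.nonempty_of_pos_sInf hpos)
      rwa [← blk, h] at hblk
    have hlt : ¬ a ≤ blkSum c k := fun hle ↦ by
      have := (blk_le_iff hmem).2 hle
      omega
    omega
  · rintro ⟨hle, hlt⟩
    have hlower : ¬ blk c a ≤ k := fun h ↦ by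
      have := (blk_le_iff hle).1 h
      omega
    exact le_antisymm ((blk_le_iff hle).2 hle) (not_le.1 hlower)

theorem blk_blkSum (hj : j ≠ 0) (hcj : 0 < c j) : blk c (blkSum c j) = j :=
  (blk_eq_iff hj).2 ⟨le_rfl, Nat.lt_add_of_pos_right hcj⟩

theorem blk_blkSum_add_one (hcj : 0 < c (j + 1)) : blk c (blkSum c j + 1) = j + 1 :=
  (blk_eq_iff j.add_one_ne_zero).2 (by rw [blkSum_succ]; omega)

theorem blk_one (hc1 : 0 < c 1) : blk c 1 = 1 :=
  blk_blkSum_add_one (j := 0) hc1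

theorem blk_preimage_subset_Icc (hj : j ∈ Set.Icc 1 l) :
    blk c ⁻¹' {j} ⊆ Set.Icc 1 (blkSum c l) := by
  intro a ha
  have hj0 : j ≠ 0 := Nat.one_le_iff_ne_zero.1 hj.1
  obtain ⟨hle, hlt⟩ := (blk_eq_iff hj0).1 ha
  have hcj := le_blkSum c hj0
  exact ⟨by omega, hle.trans (blkSum_mono c hj.2)⟩

end Blocks

section ExplicitForm

variable {c : ℕ → ℕ} {l : ℕ}

/-- The least value `m_j` of `μ + ρ` on the block `C_j`, attained at `ς_j`; for `j ≥ 2` it is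
`max(c, c_j) - c_j`, written here as the positive part of `c - c_j`. -/
def blockMin (c : ℕ → ℕ) (j : ℕ) : ℤ := if j = 1 then 1 else max ((c 1 : ℤ) - c j) 0

/-- The closed form of `μ + ρ` as a function on positions: `a ↦ m_j + (ς_j - a)` for `a ∈ C_j`. -/
def muRho (c : ℕ → ℕ) (a : ℕ) : ℤ := blockMin c (blk c a) + (blkSum c (blk c a) - a)

theorem blockMin_nonneg (c : ℕ → ℕ) (j : ℕ) : 0 ≤ blockMin c j := by
  unfold blockMin
  split_ifs <;> omega

theorem le_blockMin_add (c : ℕ → ℕ) (j : ℕ) : (c 1 : ℤ) ≤ blockMin c j + c j := by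
  unfold blockMin
  split_ifs with h
  · subst h; omega
  · omega

theorem muRho_one (hc1 : 0 < c 1) : muRho c 1 = c 1 := by
  simp [muRho, blk_one hc1, blockMin, blkSum]

theorem muRho_blkSum (hl : l ≠ 0) (hcl : 0 < c l) : muRho c (blkSum c l) = blockMin c l := by
  simp [muRho, blk_blkSum hl hcl]

theorem prodMk_blk_muRho_injective (c : ℕ → ℕ) :
    Function.Injective fun a ↦ (blk c a, muRho c a) := by
  intro a a' h
  obtain ⟨hblk, hval⟩ := Prod.mk.inj h
  rw [muRho, muRho, hblk] at hval
  omega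

theorem muRho_image_block {j : ℕ} (hj : j ≠ 0) :
    muRho c '' (blk c ⁻¹' {j}) = Set.Ico (blockMin c j) (blockMin c j + c j) := by
  ext x
  constructor
  · rintro ⟨a, rfl, rfl⟩
    obtain ⟨hle, hlt⟩ := (blk_eq_iff hj).1 rfl
    rw [Set.mem_Ico, muRho]
    omega
  · rintro ⟨hle, hlt⟩
    obtain ⟨k, hk⟩ := Int.eq_ofNat_of_zero_le (sub_nonneg.2 hle)
    have hcj := le_blkSum c hj
    have hblk : blk c (blkSum c j - k) = j := (blk_eq_iff hj).2 (by omega)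
    refine ⟨blkSum c j - k, hblk, ?_⟩
    rw [muRho, hblk]
    omega

end ExplicitForm

section Recursion

variable {c : ℕ → ℕ} {l : ℕ} {b m v : ℕ → ℤ}

theorem eq_add_sub_of_forall_eq_add_one {a s : ℕ} (has : a ≤ s)
    (h : ∀ i, a ≤ i → i < s → v i = v (i + 1) + 1) : v a = v s + (s - a) := by
  induction s, has using Nat.le_induction with
  | base => simp
  | succ s has ih =>
    rw [ih fun i hai his ↦ h i hai (his.trans s.lt_succ_self), h s has s.lt_succ_self]
    push_cast
    ring

theorem eq_add_blkSum_sub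
    (hvsame : ∀ i, 1 ≤ i → i < blkSum c l → blk c i = blk c (i + 1) → v i = v (i + 1) + 1)
    {a : ℕ} (ha : a ∈ Set.Icc 1 (blkSum c l)) :
    v a = v (blkSum c (blk c a)) + (blkSum c (blk c a) - a) := by
  have hlast : a ≤ blkSum c (blk c a) := (blk_le_iff ha.2).1 le_rfl
  have hlast_le : blkSum c (blk c a) ≤ blkSum c l := blkSum_mono c (blk_mem_Icc ha).2
  have hblk : ∀ i, a ≤ i → i ≤ blkSum c (blk c a) → blk c i = blk c a := fun i hai hi ↦
    le_antisymm ((blk_le_iff hi).2 hi) (blk_mono hai hi)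
  refine eq_add_sub_of_forall_eq_add_one hlast fun i hai hi ↦
    hvsame i (ha.1.trans hai) (hi.trans_le hlast_le) ?_
  rw [hblk i hai hi.le, hblk (i + 1) (hai.trans i.le_succ) hi]

theorem apply_blkSum_add_one
    (hvsame : ∀ i, 1 ≤ i → i < blkSum c l → blk c i = blk c (i + 1) → v i = v (i + 1) + 1)
    {j : ℕ} (hjl : j < l) (hcj : 0 < c (j + 1))
    (hvjump : v (blkSum c j) = v (blkSum c j + 1) - (b (j + 1) - 1)) :
    v (blkSum c (j + 1)) = v (blkSum c j) + b (j + 1) - c (j + 1) := by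
  have hblk : blk c (blkSum c j + 1) = j + 1 := blk_blkSum_add_one hcj
  have hmem : blkSum c j + 1 ∈ Set.Icc 1 (blkSum c l) :=
    blk_preimage_subset_Icc ⟨by omega, hjl⟩ hblk
  have hfirst := eq_add_blkSum_sub hvsame hmem
  rw [hblk, blkSum_succ] at hfirst
  rw [hvjump, blkSum_succ, hfirst]
  push_cast
  ring

theorem eq_blockMin_of_recursion (hl : 2 ≤ l) (hcl : c l = c 1)
    (hb2 : b 2 = (max (c 1) (c 2) : ℕ) - 1)
    (hbj : ∀ j, 2 ≤ j → j ≤ l - 1 →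
      b (j + 1) = (c j : ℤ) + (max (c 1) (c (j + 1)) : ℕ) - (max (c 1) (c j) : ℕ))
    (hm : ∀ j, 1 ≤ j → j < l → m (j + 1) = m j + b (j + 1) - c (j + 1)) (hml : m l = 0)
    {j : ℕ} (hj : j ∈ Set.Icc 1 l) : m j = blockMin c j := by
  have htele : ∀ k, 2 ≤ k → k ≤ l → m k = m 1 - 1 + (max (c 1) (c k) : ℕ) - c k := by
    intro k hk
    induction k, hk using Nat.le_induction with
    | base =>
      intro _
      rw [hm 1 le_rfl hl, hb2]
      ring
    | succ k hk ih =>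
      intro hkl
      rw [hm k (by omega) hkl, hbj k hk (by omega), ih (by omega)]
      ring
  have hm1 : m 1 = 1 := by
    have := htele l hl le_rfl
    rw [hml, hcl, max_self] at this
    linarith
  rcases hj.1.eq_or_lt with rfl | hj1
  · simpa [blockMin] using hm1
  · rw [htele j hj1 hj.2, hm1, blockMin, if_neg hj1.ne']
    omega

theorem eqOn_muRho (hl : 2 ≤ l) (hc : ∀ i ∈ Finset.Icc 1 l, 0 < c i) (hcl : c l = c 1)
    (hb2 : b 2 = (max (c 1) (c 2) : ℕ) - 1)
    (hbj : ∀ j, 2 ≤ j → j ≤ l - 1 →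
      b (j + 1) = (c j : ℤ) + (max (c 1) (c (j + 1)) : ℕ) - (max (c 1) (c j) : ℕ))
    (hvn : v (blkSum c l) = 0)
    (hvsame : ∀ i, 1 ≤ i → i < blkSum c l → blk c i = blk c (i + 1) → v i = v (i + 1) + 1)
    (hvjump : ∀ j, 1 ≤ j → j < l → v (blkSum c j) = v (blkSum c j + 1) - (b (j + 1) - 1)) :
    Set.EqOn v (muRho c) (Set.Icc 1 (blkSum c l)) := by
  intro a ha
  rw [eq_add_blkSum_sub hvsame ha, muRho]
  congr 1
  exact eq_blockMin_of_recursion (m := fun j ↦ v (blkSum c j)) hl hcl hb2 hbj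
    (fun j hj hjl ↦ apply_blkSum_add_one hvsame hjl
      (hc (j + 1) (Finset.mem_Icc.2 ⟨by omega, hjl⟩)) (hvjump j hj hjl)) hvn (blk_mem_Icc ha)

end Recursion

section Swap

variable {c : ℕ → ℕ} {l i j : ℕ}

theorem muRho_mem_Ico (hi : i ∈ Set.Icc 1 (blkSum c l)) :
    muRho c i ∈ Set.Ico (blockMin c (blk c i)) (blockMin c (blk c i) + c (blk c i)) :=
  muRho_image_block (Nat.one_le_iff_ne_zero.1 (blk_mem_Icc hi).1) ▸ ⟨i, rfl, rfl⟩

theorem muRho_swap_injOn_iff (hi : i ∈ Set.Icc 1 (blkSum c l)) (hj : j ∈ Set.Icc 1 (blkSum c l))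
    (hblk : blk c i ≠ blk c j) (hlt : muRho c j < muRho c i) :
    (Set.Icc 1 (blkSum c l)).InjOn (fun a ↦ (blk c a, muRho c (Equiv.swap i j a))) ↔
      muRho c j < blockMin c (blk c i) ∧ blockMin c (blk c j) + c (blk c j) ≤ muRho c i := by
  have himage : ∀ a ∈ Set.Icc 1 (blkSum c l),
      muRho c '' (Set.Icc 1 (blkSum c l) ∩ blk c ⁻¹' {blk c a}) =
        Set.Ico (blockMin c (blk c a)) (blockMin c (blk c a) + c (blk c a)) := fun a ha ↦ by
    have hmem := blk_mem_Icc ha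
    rw [Set.inter_eq_right.2 (blk_preimage_subset_Icc hmem),
      muRho_image_block (Nat.one_le_iff_ne_zero.1 hmem.1)]
  rw [injOn_prodMk_swap_iff (prodMk_blk_muRho_injective c).injOn hi hj hblk hlt.ne',
    himage i hi, himage j hj, Set.mem_Ico, Set.mem_Ico]
  have hi_bounds := muRho_mem_Ico hi
  have hj_bounds := muRho_mem_Ico hj
  rw [Set.mem_Ico] at hi_bounds hj_bounds
  omega

theorem blockMin_separation_iff (hl : l ≠ 1) (hcl : c l = c 1)
    (hcne : ∀ j, 1 < j → j < l → c j ≠ c 1) {p r : ℕ} (hpr : p < r) (hrl : r ≤ l)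
    {x y : ℤ} (hx : x < blockMin c p + c p) (hy : blockMin c r ≤ y) :
    (y < blockMin c p ∧ blockMin c r + c r ≤ x) ↔ (p = 1 ∧ x = c 1) ∧ (r = l ∧ y = 0) := by
  constructor
  · rintro ⟨hyp, hrx⟩
    have hr_nonneg := blockMin_nonneg c r
    have hr_top := le_blockMin_add c r
    have hp1 : p = 1 := by
      by_contra hp1
      rw [blockMin, if_neg hp1] at hx hyp
      omega
    subst hp1
    rw [blockMin, if_pos rfl] at hx hyp
    have hcr : c r = c 1 := by
      have hr : blockMin c r = max ((c 1 : ℤ) - c r) 0 := if_neg hpr.ne'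
      omega
    have hr : r = l := hrl.eq_or_lt.resolve_right fun hrl ↦ hcne r hpr hrl hcr
    omega
  · rintro ⟨⟨rfl, rfl⟩, rfl, rfl⟩
    simp [blockMin, hl, hcl]

theorem muRho_swap_regular_iff (hl : 2 ≤ l) (hc1 : 0 < c 1) (hcl : c l = c 1)
    (hcne : ∀ j, 1 < j → j < l → c j ≠ c 1) (hi : 1 ≤ i) (hij : i < j) (hj : j ≤ blkSum c l) :
    (blk c i ≠ blk c j ∧ 1 ≤ muRho c i - muRho c j ∧
        (Set.Icc 1 (blkSum c l)).InjOn fun a ↦ (blk c a, muRho c (Equiv.swap i j a))) ↔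
      i = 1 ∧ j = blkSum c l := by
  have hi_mem : i ∈ Set.Icc 1 (blkSum c l) := ⟨hi, hij.le.trans hj⟩
  have hj_mem : j ∈ Set.Icc 1 (blkSum c l) := ⟨hi.trans hij.le, hj⟩
  have hfirst : i = 1 ↔ blk c i = 1 ∧ muRho c i = c 1 := by
    rw [← (prodMk_blk_muRho_injective c).eq_iff, Prod.mk.injEq, blk_one hc1, muRho_one hc1]
  have hlast : j = blkSum c l ↔ blk c j = l ∧ muRho c j = 0 := by
    rw [← (prodMk_blk_muRho_injective c).eq_iff, Prod.mk.injEq,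
      blk_blkSum (by omega) (hcl ▸ hc1), muRho_blkSum (by omega) (hcl ▸ hc1)]
    simp [blockMin, hcl, show l ≠ 1 by omega]
  have hseparation (hlt : blk c i < blk c j) :=
    blockMin_separation_iff (by omega) hcl hcne hlt (blk_mem_Icc hj_mem).2
      (muRho_mem_Ico hi_mem).2 (muRho_mem_Ico hj_mem).1
  rw [hfirst, hlast]
  constructor
  · rintro ⟨hblk, hgap, hinj⟩
    exact (hseparation ((blk_mono hij.le hj).lt_of_ne hblk)).1
      ((muRho_swap_injOn_iff hi_mem hj_mem hblk (by omega)).1 hinj)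
  · intro h
    have hblk : blk c i < blk c j := by omega
    have hlt : muRho c j < muRho c i := by omega
    exact ⟨hblk.ne, by omega,
      (muRho_swap_injOn_iff hi_mem hj_mem hblk.ne hlt).2 ((hseparation hblk).2 h)⟩

end Swap

/-- Proposition 4.2: `S°_μ = {(c, β)}`.  With `v` encoding `μ + ρ` (so that
`(μ+ρ, ε_i - ε_j) = v i - v j`), the pairs `(i,j)`, `i < j`, with `ε_i - ε_j ∉ R_I`,
`(μ+ρ, ε_i-ε_j) ≥ 1`, and `s_{ε_i-ε_j}(μ+ρ)` regular for `I` (the swapped `v` injective on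
each block) form exactly the singleton `{(1,n)}`; moreover `v 1 - v n = c`. -/
theorem S_mu_regular_eq_singleton
    (l : ℕ) (hl : 2 ≤ l) (c : ℕ → ℕ) (hc : ∀ i ∈ Finset.Icc 1 l, 0 < c i)
    (hcl : c l = c 1) (hcne : ∀ j, 1 < j → j < l → c j ≠ c 1)
    (n : ℕ) (hn : n = blkSum c l)
    (b : ℕ → ℤ) (hb2 : b 2 = (max (c 1) (c 2) : ℕ) - 1)
    (hbj : ∀ j, 2 ≤ j → j ≤ l - 1 →
      b (j + 1) = (c j : ℤ) + (max (c 1) (c (j + 1)) : ℕ) - (max (c 1) (c j) : ℕ))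
    (v : ℕ → ℤ) (hvn : v n = 0)
    (hvsame : ∀ i, 1 ≤ i → i < n → blk c i = blk c (i + 1) → v i = v (i + 1) + 1)
    (hvjump : ∀ j, 1 ≤ j → j < l →
      v (blkSum c j) = v (blkSum c j + 1) - (b (j + 1) - 1)) :
    (∀ i j, 1 ≤ i → i < j → j ≤ n →
      ((blk c i ≠ blk c j ∧ 1 ≤ v i - v j ∧
          ∀ a a', 1 ≤ a → a < a' → a' ≤ n → blk c a = blk c a' →
            (v ∘ Equiv.swap i j) a ≠ (v ∘ Equiv.swap i j) a')
        ↔ (i = 1 ∧ j = n))) ∧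
    v 1 - v n = c 1 := by
  subst hn
  have hv : Set.EqOn v (muRho c) (Set.Icc 1 (blkSum c l)) :=
    eqOn_muRho hl hc hcl hb2 hbj hvn hvsame hvjump
  have hc1 : 0 < c 1 := hc 1 (Finset.mem_Icc.2 ⟨le_rfl, by omega⟩)
  refine ⟨fun i j hi hij hj ↦ ?_, ?_⟩
  · have hi_mem : i ∈ Set.Icc 1 (blkSum c l) := ⟨hi, hij.le.trans hj⟩
    have hj_mem : j ∈ Set.Icc 1 (blkSum c l) := ⟨hi.trans hij.le, hj⟩
    have hswap : Set.EqOn (v ∘ Equiv.swap i j) (muRho c ∘ Equiv.swap i j)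
        (Set.Icc 1 (blkSum c l)) :=
      hv.comp_right (Equiv.swap_bijOn_self (iff_of_true hi_mem hj_mem)).mapsTo
    have hpair : Set.EqOn (fun a ↦ (blk c a, (v ∘ Equiv.swap i j) a))
        (fun a ↦ (blk c a, muRho c (Equiv.swap i j a))) (Set.Icc 1 (blkSum c l)) :=
      fun a ha ↦ congrArg (Prod.mk (blk c a)) (hswap ha)
    rw [← injOn_prodMk_Icc_iff, hpair.injOn_iff, hv hi_mem, hv hj_mem]
    exact muRho_swap_regular_iff hl hc1 hcl hcne hi hij hj
  · have h1_mem : 1 ∈ Set.Icc 1 (blkSum c l) :=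
      blk_preimage_subset_Icc ⟨le_rfl, by omega⟩ (blk_one hc1)
    rw [hvn, hv h1_mem, muRho_one hc1, sub_zero]

end
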